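/- arXiv:1506.00456 — 3 statements merged into one kernel-verified Lean document; each statement's English description precedes it below -/
import Mathlib

section
/- Let ε > 0 and Re > 0 be real parameters. Suppose u, v, w, p : ℝ² × [0,1] × ℝ → ℝ are smooth functions of (x, y, z, t) satisfying, at every point of ℝ² × [0,1] × ℝ, the linearized Navier–Stokes volume equations: u_t − (√ε/Re)(u_xx + ε u_yy + u_zz/ε) + p_x = 0, v_t − (√ε/Re)(v_xx + ε v_yy + v_zz/ε) + √ε p_y = 0, w_t − (√ε/Re)(w_xx + ε w_yy + w_zz/ε) + p_z = 0, and u_x + √ε v_y + w_z/ε = 0. Then w satisfies at every such point the fourth-order equation (∂_z² + ε ∂_x² + ε² ∂_y²)(−Re √ε ∂_t + (∂_z² + ε ∂_x² + ε² ∂_y²)) w = 0. -/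
noncomputable section

/-- Partial derivative with respect to the first variable `x`. -/
def pdx (f : ℝ → ℝ → ℝ → ℝ → ℝ) : ℝ → ℝ → ℝ → ℝ → ℝ :=
  fun x y z t => deriv (fun x' => f x' y z t) x

/-- Partial derivative with respect to the second variable `y`. -/
def pdy (f : ℝ → ℝ → ℝ → ℝ → ℝ) : ℝ → ℝ → ℝ → ℝ → ℝ :=
  fun x y z t => deriv (fun y' => f x y' z t) y

/-- Partial derivative with respect to the third variable `z`. -/
def pdz (f : ℝ → ℝ → ℝ → ℝ → ℝ) : ℝ → ℝ → ℝ → ℝ → ℝ :=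
  fun x y z t => deriv (fun z' => f x y z' t) z

/-- Partial derivative with respect to the fourth variable `t`. -/
def pdt (f : ℝ → ℝ → ℝ → ℝ → ℝ) : ℝ → ℝ → ℝ → ℝ → ℝ :=
  fun x y z t => deriv (fun t' => f x y z t') t

/-- The operator `∂_z² + ε ∂_x² + ε² ∂_y²`. -/
def Lop (ε : ℝ) (f : ℝ → ℝ → ℝ → ℝ → ℝ) : ℝ → ℝ → ℝ → ℝ → ℝ :=
  fun x y z t =>
    pdz (pdz f) x y z t + ε * pdx (pdx f) x y z t + ε ^ 2 * pdy (pdy f) x y z t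

/-- The space of points `(x, y, z, t)`. -/
abbrev E4 := ℝ × ℝ × ℝ × ℝ

/-- Smooth functions. -/
def Sm : Submodule ℝ (E4 → ℝ) where
  carrier := {f | ContDiff ℝ (⊤ : ℕ∞) f}
  add_mem' := by
    intro a b ha hb
    rw [Set.mem_ofPred_eq] at *
    exact ContDiff.add ha hb
  zero_mem' := by
    rw [Set.mem_ofPred_eq]
    exact contDiff_const
  smul_mem' := by
    intro c f hf
    rw [Set.mem_ofPred_eq] at *
    exact ContDiff.const_smul c hf

theorem sm_diff (f : Sm) : Differentiable ℝ f.1 :=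
  (show ContDiff ℝ (⊤ : ℕ∞) f.1 from f.2).differentiable (by simp)

/-- Directional derivative as an endomorphism of the smooth functions. -/
def DD (e : E4) : Sm →ₗ[ℝ] Sm where
  toFun f := ⟨fun q => fderiv ℝ f.1 q e, by
    have h : ContDiff ℝ (⊤ : ℕ∞) f.1 := f.2
    have h2 : ContDiff ℝ (⊤ : ℕ∞) (fderiv ℝ f.1) := h.fderiv_right (by simp)
    exact h2.clm_apply contDiff_const⟩
  map_add' f g := by
    ext q
    change fderiv ℝ (f.1 + g.1) q e = fderiv ℝ f.1 q e + fderiv ℝ g.1 q e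
    rw [fderiv_add (sm_diff f q) (sm_diff g q)]
    rfl
  map_smul' c f := by
    ext q
    change fderiv ℝ (c • f.1) q e = c • fderiv ℝ f.1 q e
    rw [fderiv_const_smul (sm_diff f q)]
    rfl

theorem DD_apply (e : E4) (f : Sm) (q : E4) : (DD e f).1 q = fderiv ℝ f.1 q e := rfl

theorem DD_comm (a b : E4) (f : Sm) : DD a (DD b f) = DD b (DD a f) := by
  have h : ContDiff ℝ (⊤ : ℕ∞) f.1 := f.2
  have h2 : ContDiff ℝ (⊤ : ℕ∞) (fderiv ℝ f.1) := h.fderiv_right (by simp)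
  have h3 : Differentiable ℝ (fderiv ℝ f.1) := h2.differentiable (by simp)
  have key : ∀ (c d q : E4), (DD c (DD d f)).1 q = fderiv ℝ (fderiv ℝ f.1) q c d := by
    intro c d q
    change fderiv ℝ (fun q => fderiv ℝ f.1 q d) q c = _
    rw [fderiv_clm_apply (h3 q) (differentiableAt_const d)]
    simp
  ext q
  rw [key, key]
  have hs : IsSymmSndFDerivAt ℝ f.1 q :=
    h.contDiffAt.isSymmSndFDerivAt (by
      simp only [minSmoothness_of_isRCLikeNormedField]
      exact WithTop.coe_le_coe.2 (le_top : (2 : ℕ∞) ≤ ⊤))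
  exact hs a b

/-- The open slab. -/
def Om : Set E4 := {q | q.2.2.1 ∈ Set.Ioo (0:ℝ) 1}

theorem Om_open : IsOpen Om :=
  isOpen_Ioo.preimage (by fun_prop)

/-- Smooth functions vanishing on the open slab. -/
def NN : Submodule ℝ Sm where
  carrier := {f | ∀ q ∈ Om, f.1 q = 0}
  add_mem' := by
    intro a b ha hb q hq
    change a.1 q + b.1 q = 0
    rw [ha q hq, hb q hq, add_zero]
  zero_mem' := fun _ _ => rfl
  smul_mem' := by
    intro c a ha q hq
    change c * a.1 q = 0
    rw [ha q hq, mul_zero]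

theorem NN_DD (e : E4) {f : Sm} (hf : f ∈ NN) : DD e f ∈ NN := by
  intro q hq
  rw [DD_apply]
  have : f.1 =ᶠ[nhds q] fun _ => (0:ℝ) := by
    filter_upwards [Om_open.mem_nhds hq] with r hr using hf r hr
  rw [this.fderiv_eq]
  simp

theorem NN_closed {f : Sm} (hf : f ∈ NN) (x y z t : ℝ) (hz : z ∈ Set.Icc (0:ℝ) 1) :
    f.1 (x, y, z, t) = 0 := by
  have hc : Continuous fun z' => f.1 (x, y, z', t) :=
    (sm_diff f).continuous.comp (by fun_prop)
  have hcl : IsClosed {z' | f.1 (x, y, z', t) = 0} := isClosed_eq hc continuous_const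
  have hsub : Set.Ioo (0:ℝ) 1 ⊆ {z' | f.1 (x, y, z', t) = 0} := fun z' hz' =>
    hf (x, y, z', t) hz'
  have := closure_minimal hsub hcl
  rw [closure_Ioo (by norm_num)] at this
  exact this hz

/-- `x`-derivative. -/
def DX := DD (1, 0, 0, 0)
/-- `y`-derivative. -/
def DY := DD (0, 1, 0, 0)
/-- `z`-derivative. -/
def DZ := DD (0, 0, 1, 0)
/-- `t`-derivative. -/
def DT := DD (0, 0, 0, 1)

/-- A curried function represented by a smooth function. -/
def SRel (f : ℝ → ℝ → ℝ → ℝ → ℝ) (F : Sm) : Prop := ∀ x y z t, f x y z t = F.1 (x, y, z, t)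

theorem deriv_line (F : Sm) (g : ℝ → E4) (e : E4) (s : ℝ) (hg : HasDerivAt g e s) :
    deriv (fun s => F.1 (g s)) s = (DD e F).1 (g s) :=
  ((sm_diff F (g s)).hasFDerivAt.comp_hasDerivAt s hg).deriv

theorem SRel.x {f F} (h : SRel f F) : SRel (pdx f) (DX F) := by
  intro x y z t
  simp only [pdx, h _ _ _ _]
  exact deriv_line F (fun s => (s, y, z, t)) _ x
    ((hasDerivAt_id x).prodMk (hasDerivAt_const x (y, z, t)))

theorem SRel.y {f F} (h : SRel f F) : SRel (pdy f) (DY F) := by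
  intro x y z t
  simp only [pdy, h _ _ _ _]
  exact deriv_line F (fun s => (x, s, z, t)) _ y
    ((hasDerivAt_const y x).prodMk ((hasDerivAt_id y).prodMk (hasDerivAt_const y (z, t))))

theorem SRel.z {f F} (h : SRel f F) : SRel (pdz f) (DZ F) := by
  intro x y z t
  simp only [pdz, h _ _ _ _]
  exact deriv_line F (fun s => (x, y, s, t)) _ z
    ((hasDerivAt_const z x).prodMk ((hasDerivAt_const z y).prodMk
      ((hasDerivAt_id z).prodMk (hasDerivAt_const z t))))

theorem SRel.t {f F} (h : SRel f F) : SRel (pdt f) (DT F) := by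
  intro x y z t
  simp only [pdt, h _ _ _ _]
  exact deriv_line F (fun s => (x, y, z, s)) _ t
    ((hasDerivAt_const t x).prodMk ((hasDerivAt_const t y).prodMk
      ((hasDerivAt_const t z).prodMk (hasDerivAt_id t))))

/-- `Lop` on smooth functions. -/
def LL (ε : ℝ) (F : Sm) : Sm := DZ (DZ F) + ε • DX (DX F) + ε ^ 2 • DY (DY F)

theorem SRel.L {f F} (h : SRel f F) (ε : ℝ) : SRel (Lop ε f) (LL ε F) := by
  intro x y z t
  simp only [Lop, h.x.x _ _ _ _, h.y.y _ _ _ _, h.z.z _ _ _ _]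
  rfl

/-- The algebraic core of the elimination. -/
theorem core (s Re : ℝ) (hs : s ≠ 0) (hRe : Re ≠ 0) (u v w p : Sm)
    (hu : DT u - (s / Re) • (DX (DX u) + s ^ 2 • DY (DY u) + (s ^ 2)⁻¹ • DZ (DZ u)) + DX p ∈ NN)
    (hv : DT v - (s / Re) • (DX (DX v) + s ^ 2 • DY (DY v) + (s ^ 2)⁻¹ • DZ (DZ v))
      + s • DY p ∈ NN)
    (hw : DT w - (s / Re) • (DX (DX w) + s ^ 2 • DY (DY w) + (s ^ 2)⁻¹ • DZ (DZ w)) + DZ p ∈ NN)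
    (hd : DX u + s • DY v + (s ^ 2)⁻¹ • DZ w ∈ NN) :
    LL (s ^ 2) (-(Re * s) • DT w + LL (s ^ 2) w) ∈ NN := by
  have cyx : ∀ f, DY (DX f) = DX (DY f) := DD_comm _ _
  have czx : ∀ f, DZ (DX f) = DX (DZ f) := DD_comm _ _
  have ctx : ∀ f, DT (DX f) = DX (DT f) := DD_comm _ _
  have czy : ∀ f, DZ (DY f) = DY (DZ f) := DD_comm _ _
  have cty : ∀ f, DT (DY f) = DY (DT f) := DD_comm _ _
  have ctz : ∀ f, DT (DZ f) = DZ (DT f) := DD_comm _ _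
  have nx : ∀ {f}, f ∈ NN → DX f ∈ NN := NN_DD _
  have ny : ∀ {f}, f ∈ NN → DY f ∈ NN := NN_DD _
  have nz : ∀ {f}, f ∈ NN → DZ f ∈ NN := NN_DD _
  have nt : ∀ {f}, f ∈ NN → DT f ∈ NN := NN_DD _
  have hP : LL (s ^ 2) p ∈ NN := by
    have h1 := NN.smul_mem (s ^ 2) (NN.sub_mem
      (NN.add_mem (NN.add_mem (nx hu) (NN.smul_mem s (ny hv))) (NN.smul_mem (s ^ 2)⁻¹ (nz hw)))
      (NN.sub_mem (nt hd) (NN.smul_mem (s / Re) (NN.add_mem (NN.add_mem (nx (nx hd))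
        (NN.smul_mem (s ^ 2) (ny (ny hd)))) (NN.smul_mem (s ^ 2)⁻¹ (nz (nz hd)))))))
    convert h1 using 1
    simp only [LL, map_add, map_sub, map_smul, cyx, czx, ctx, czy, cty, ctz]
    match_scalars <;> field_simp <;> ring
  have h2 := NN.smul_mem (Re * s) (NN.sub_mem (nz hP) (NN.add_mem (NN.add_mem (nz (nz hw))
    (NN.smul_mem (s ^ 2) (nx (nx hw)))) (NN.smul_mem ((s ^ 2) ^ 2) (ny (ny hw)))))
  convert h2 using 1
  simp only [LL, map_add, map_sub, map_smul, cyx, czx, ctx, czy, cty, ctz]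
  match_scalars <;> field_simp <;> ring

theorem elimination_of_velocity_and_pressure
    (ε Re : ℝ) (hε : 0 < ε) (hRe : 0 < Re)
    (u v w p : ℝ → ℝ → ℝ → ℝ → ℝ)
    (hu : ContDiff ℝ (⊤ : ℕ∞) (fun q : ℝ × ℝ × ℝ × ℝ => u q.1 q.2.1 q.2.2.1 q.2.2.2))
    (hv : ContDiff ℝ (⊤ : ℕ∞) (fun q : ℝ × ℝ × ℝ × ℝ => v q.1 q.2.1 q.2.2.1 q.2.2.2))
    (hw : ContDiff ℝ (⊤ : ℕ∞) (fun q : ℝ × ℝ × ℝ × ℝ => w q.1 q.2.1 q.2.2.1 q.2.2.2))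
    (hp : ContDiff ℝ (⊤ : ℕ∞) (fun q : ℝ × ℝ × ℝ × ℝ => p q.1 q.2.1 q.2.2.1 q.2.2.2))
    (hequ : ∀ (x y t : ℝ), ∀ z ∈ Set.Icc (0:ℝ) 1,
      pdt u x y z t - (Real.sqrt ε / Re) *
        (pdx (pdx u) x y z t + ε * pdy (pdy u) x y z t + pdz (pdz u) x y z t / ε)
        + pdx p x y z t = 0)
    (heqv : ∀ (x y t : ℝ), ∀ z ∈ Set.Icc (0:ℝ) 1,
      pdt v x y z t - (Real.sqrt ε / Re) *
        (pdx (pdx v) x y z t + ε * pdy (pdy v) x y z t + pdz (pdz v) x y z t / ε)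
        + Real.sqrt ε * pdy p x y z t = 0)
    (heqw : ∀ (x y t : ℝ), ∀ z ∈ Set.Icc (0:ℝ) 1,
      pdt w x y z t - (Real.sqrt ε / Re) *
        (pdx (pdx w) x y z t + ε * pdy (pdy w) x y z t + pdz (pdz w) x y z t / ε)
        + pdz p x y z t = 0)
    (hdiv : ∀ (x y t : ℝ), ∀ z ∈ Set.Icc (0:ℝ) 1,
      pdx u x y z t + Real.sqrt ε * pdy v x y z t + pdz w x y z t / ε = 0) :
    ∀ (x y t : ℝ), ∀ z ∈ Set.Icc (0:ℝ) 1,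
      Lop ε (fun x' y' z' t' =>
        -(Re * Real.sqrt ε) * pdt w x' y' z' t' + Lop ε w x' y' z' t') x y z t = 0 := by
  obtain ⟨s, hs, rfl⟩ : ∃ s : ℝ, 0 < s ∧ ε = s ^ 2 :=
    ⟨Real.sqrt ε, Real.sqrt_pos.2 hε, (Real.sq_sqrt hε.le).symm⟩
  have hsq : Real.sqrt (s ^ 2) = s := Real.sqrt_sq hs.le
  simp only [hsq] at hequ heqv hdiv heqw ⊢
  have ru : SRel u ⟨_, hu⟩ := fun _ _ _ _ => rfl
  have rv : SRel v ⟨_, hv⟩ := fun _ _ _ _ => rfl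
  have rw' : SRel w ⟨_, hw⟩ := fun _ _ _ _ => rfl
  have rp : SRel p ⟨_, hp⟩ := fun _ _ _ _ => rfl
  generalize (⟨_, hu⟩ : Sm) = U at ru
  generalize (⟨_, hv⟩ : Sm) = V at rv
  generalize (⟨_, hw⟩ : Sm) = W at rw'
  generalize (⟨_, hp⟩ : Sm) = P at rp
  have main := core s Re hs.ne' hRe.ne' U V W P
    (by
      rintro ⟨x, y, z, t⟩ hq
      have h := hequ x y t z ⟨hq.1.le, hq.2.le⟩
      rw [ru.t, ru.x.x, ru.y.y, ru.z.z, rp.x, div_eq_inv_mul _ (s ^ 2)] at h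
      exact h)
    (by
      rintro ⟨x, y, z, t⟩ hq
      have h := heqv x y t z ⟨hq.1.le, hq.2.le⟩
      rw [rv.t, rv.x.x, rv.y.y, rv.z.z, rp.y, div_eq_inv_mul _ (s ^ 2)] at h
      exact h)
    (by
      rintro ⟨x, y, z, t⟩ hq
      have h := heqw x y t z ⟨hq.1.le, hq.2.le⟩
      rw [rw'.t, rw'.x.x, rw'.y.y, rw'.z.z, rp.z, div_eq_inv_mul _ (s ^ 2)] at h
      exact h)
    (by
      rintro ⟨x, y, z, t⟩ hq
      have h := hdiv x y t z ⟨hq.1.le, hq.2.le⟩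
      rw [ru.x, rv.y, rw'.z, div_eq_inv_mul _ (s ^ 2)] at h
      exact h)
  intro x y t z hz
  have rG : SRel (fun x' y' z' t' => -(Re * s) * pdt w x' y' z' t' + Lop (s ^ 2) w x' y' z' t')
      (-(Re * s) • DT W + LL (s ^ 2) W) := by
    intro x y z t
    simp only [rw'.t _ _ _ _, rw'.L _ _ _ _ _]
    rfl
  rw [rG.L]
  exact NN_closed main x y z t hz
end
end

section
/- Let ε > 0, Re > 0, Bo > 0, k > 0 be real, ω ∈ ℂ, and let μ ∈ ℂ with μ ≠ 0 satisfy μ² = ε k² − i ω Re √ε. Let M be the 4×4 complex matrix with rows (√ε k sinh(√ε k), −√ε k cosh(√ε k), μ sinh μ, −μ cosh μ); (cosh(√ε k), −sinh(√ε k), cosh μ, −sinh μ); (2 k² ε, 0, μ² + ε k², 0); (−k² − k⁴/Bo, √ε ω² k + 2 i ε ω k³/Re, −k² − k⁴/Bo, 2 μ √ε i ω k²/Re). Then det M = 0 if and only if the dispersion relation holds: 4 ε k² μ (ε k² + μ²) + 4 μ k³ ε^{3/2} (μ sinh(k√ε) sinh μ − k√ε cosh(k√ε) cosh μ) − (ε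 k² + μ²)² (μ cosh(k√ε) cosh μ − k√ε sinh(k√ε) sinh μ) − (k + k³/Bo) √ε Re² (μ sinh(k√ε) cosh μ − k√ε cosh(k√ε) sinh μ) = 0. -/
noncomputable section

open Complex

theorem det_iff_dispersion_relation
    (ε Re Bo k : ℝ) (hε : 0 < ε) (hRe : 0 < Re) (hBo : 0 < Bo) (hk : 0 < k)
    (ω μ : ℂ) (hμ0 : μ ≠ 0)
    (hμ : μ ^ 2 = ((ε * k ^ 2 : ℝ) : ℂ) - Complex.I * ω * ((Re * Real.sqrt ε : ℝ) : ℂ))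
    (M : Matrix (Fin 4) (Fin 4) ℂ)
    (hM : M = !![
      ((Real.sqrt ε * k : ℝ) : ℂ) * Complex.sinh ((Real.sqrt ε * k : ℝ) : ℂ),
        -((Real.sqrt ε * k : ℝ) : ℂ) * Complex.cosh ((Real.sqrt ε * k : ℝ) : ℂ),
        μ * Complex.sinh μ, -μ * Complex.cosh μ;
      Complex.cosh ((Real.sqrt ε * k : ℝ) : ℂ), -Complex.sinh ((Real.sqrt ε * k : ℝ) : ℂ),
        Complex.cosh μ, -Complex.sinh μ;
      ((2 * k ^ 2 * ε : ℝ) : ℂ), 0, μ ^ 2 + ((ε * k ^ 2 : ℝ) : ℂ), 0;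
      ((-(k ^ 2) - k ^ 4 / Bo : ℝ) : ℂ),
        ((Real.sqrt ε : ℝ) : ℂ) * ω ^ 2 * (k : ℂ)
          + 2 * Complex.I * (ε : ℂ) * ω * (k : ℂ) ^ 3 / (Re : ℂ),
        ((-(k ^ 2) - k ^ 4 / Bo : ℝ) : ℂ),
        2 * μ * ((Real.sqrt ε : ℝ) : ℂ) * Complex.I * ω * (k : ℂ) ^ 2 / (Re : ℂ)]) :
    M.det = 0 ↔
      ((4 * ε * k ^ 2 : ℝ) : ℂ) * μ * (((ε * k ^ 2 : ℝ) : ℂ) + μ ^ 2)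
        + ((4 * k ^ 3 * (ε * Real.sqrt ε) : ℝ) : ℂ) * μ *
          (μ * Complex.sinh ((k * Real.sqrt ε : ℝ) : ℂ) * Complex.sinh μ
            - ((k * Real.sqrt ε : ℝ) : ℂ) * Complex.cosh ((k * Real.sqrt ε : ℝ) : ℂ)
              * Complex.cosh μ)
        - (((ε * k ^ 2 : ℝ) : ℂ) + μ ^ 2) ^ 2 *
          (μ * Complex.cosh ((k * Real.sqrt ε : ℝ) : ℂ) * Complex.cosh μ
            - ((k * Real.sqrt ε : ℝ) : ℂ) * Complex.sinh ((k * Real.sqrt ε : ℝ) : ℂ)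
              * Complex.sinh μ)
        - (((k + k ^ 3 / Bo) * Real.sqrt ε * Re ^ 2 : ℝ) : ℂ) *
          (μ * Complex.sinh ((k * Real.sqrt ε : ℝ) : ℂ) * Complex.cosh μ
            - ((k * Real.sqrt ε : ℝ) : ℂ) * Complex.cosh ((k * Real.sqrt ε : ℝ) : ℂ)
              * Complex.sinh μ) = 0 := by
  have hs : Real.sqrt ε ^ 2 = ε := Real.sq_sqrt hε.le
  have hs0 : ((Real.sqrt ε : ℝ) : ℂ) ≠ 0 := by
    exact_mod_cast (Real.sqrt_pos.mpr hε).ne'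
  have hsC : (ε : ℂ) = ((Real.sqrt ε : ℝ) : ℂ) ^ 2 := by exact_mod_cast hs.symm
  have hR0 : (Re : ℂ) ≠ 0 := by exact_mod_cast hRe.ne'
  have hk0 : (k : ℂ) ≠ 0 := by exact_mod_cast hk.ne'
  have hB0 : (Bo : ℂ) ≠ 0 := by exact_mod_cast hBo.ne'
  have hcomm : Real.sqrt ε * k = k * Real.sqrt ε := mul_comm _ _
  subst hM
  rw [hcomm]
  have h1 := Complex.cosh_sq ((k * Real.sqrt ε : ℝ) : ℂ)
  have h2 := Complex.cosh_sq μ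
  have h3 : Complex.sinh μ = Complex.sinh ((k * Real.sqrt ε : ℝ) : ℂ) ∧
      Complex.cosh μ = Complex.cosh ((k * Real.sqrt ε : ℝ) : ℂ) ∧
        μ = ((k * Real.sqrt ε : ℝ) : ℂ) ∨
      Complex.sinh μ = -Complex.sinh ((k * Real.sqrt ε : ℝ) : ℂ) ∧
      Complex.cosh μ = Complex.cosh ((k * Real.sqrt ε : ℝ) : ℂ) ∧
        μ = -((k * Real.sqrt ε : ℝ) : ℂ) ∨
      μ ^ 2 ≠ ((k * Real.sqrt ε : ℝ) : ℂ) ^ 2 := by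
    by_cases h : μ ^ 2 = ((k * Real.sqrt ε : ℝ) : ℂ) ^ 2
    · rcases sq_eq_sq_iff_eq_or_eq_neg.mp h with h | h
      · left; rw [h]; simp
      · right; left; rw [h]; simp
    · exact Or.inr (Or.inr h)
  generalize Complex.cosh ((k * Real.sqrt ε : ℝ) : ℂ) = C at *
  generalize Complex.sinh ((k * Real.sqrt ε : ℝ) : ℂ) = S at *
  generalize Complex.cosh μ = c at *
  generalize Complex.sinh μ = d at *
  push_cast at *
  rw [hsC] at *
  generalize ((Real.sqrt ε : ℝ) : ℂ) = s at *
  generalize (k : ℂ) = kk at *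
  generalize (Re : ℂ) = R at *
  generalize (Bo : ℂ) = B at *
  have hw : Complex.I * ω = ((kk * s) ^ 2 - μ ^ 2) / (R * s) := by
    field_simp
    linear_combination hμ
  have hP : s * ω ^ 2 * kk + 2 * Complex.I * s ^ 2 * ω * kk ^ 3 / R =
      kk * ((kk * s) ^ 2 - μ ^ 2) * ((kk * s) ^ 2 + μ ^ 2) / (R ^ 2 * s) := by
    have e : s * ω ^ 2 * kk + 2 * Complex.I * s ^ 2 * ω * kk ^ 3 / R =
      - s * kk * (Complex.I * ω) ^ 2 + 2 * s ^ 2 * kk ^ 3 / R * (Complex.I * ω) := by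
      rw [mul_pow, Complex.I_sq]; ring
    rw [e, hw]; field_simp; ring
  have hQ : 2 * μ * s * Complex.I * ω * kk ^ 2 / R =
      2 * μ * kk ^ 2 * ((kk * s) ^ 2 - μ ^ 2) / R ^ 2 := by
    have e : 2 * μ * s * Complex.I * ω * kk ^ 2 / R =
      2 * μ * s * kk ^ 2 / R * (Complex.I * ω) := by ring
    rw [e, hw]; field_simp
  rw [hP, hQ]
  have key : ∀ T : ℂ, T = 4 * s ^ 2 * kk ^ 2 * μ * (s ^ 2 * kk ^ 2 + μ ^ 2)
        + 4 * kk ^ 3 * (s ^ 2 * s) * μ * (μ * S * d - kk * s * C * c)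
        - (s ^ 2 * kk ^ 2 + μ ^ 2) ^ 2 * (μ * C * c - kk * s * S * d)
        - (kk + kk ^ 3 / B) * s * R ^ 2 * (μ * S * c - kk * s * C * d) →
      Matrix.det !![
        kk * s * S, -(kk * s) * C, μ * d, -μ * c;
        C, -S, c, -d;
        2 * kk ^ 2 * s ^ 2, 0, μ ^ 2 + s ^ 2 * kk ^ 2, 0;
        -kk ^ 2 - kk ^ 4 / B,
        kk * ((kk * s) ^ 2 - μ ^ 2) * ((kk * s) ^ 2 + μ ^ 2) / (R ^ 2 * s),
        -kk ^ 2 - kk ^ 4 / B,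
        2 * μ * kk ^ 2 * ((kk * s) ^ 2 - μ ^ 2) / R ^ 2] =
      ((kk * s) ^ 2 - μ ^ 2) * (kk / (s * R ^ 2)) * T := by
    rintro T rfl
    simp [Matrix.det_succ_row_zero, Fin.sum_univ_succ, Fin.succAbove]
    field_simp
    have h1b : C ^ 2 = S ^ 2 + 1 := h1
    have h2b : c ^ 2 = d ^ 2 + 1 := h2
    ring_nf
    simp only [h1b, h2b]
    ring
  have keyb := key _ rfl
  have hkey0 : kk / (s * R ^ 2) ≠ 0 :=
    div_ne_zero hk0 (mul_ne_zero hs0 (pow_ne_zero _ hR0))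
  rw [keyb, mul_eq_zero, mul_eq_zero]
  constructor
  · rintro ((h | h) | h)
    · rcases h3 with ⟨rfl, rfl, rfl⟩ | ⟨rfl, rfl, rfl⟩ | h3
      · linear_combination (-8 * (kk * s) ^ 5) * h1
      · linear_combination (8 * (kk * s) ^ 5) * h1
      · exact absurd (sub_eq_zero.mp h).symm h3
    · exact absurd h hkey0
    · exact h
  · exact fun h => Or.inr h
end
end

section
/- Let η : ℝ → ℂ be a Schwartz function and let X be a nonzero real number. Then the limit as a → 0⁺ of ∫_ℝ e^{−iXξ} ( ∫₀^∞ η'(ξ+ξ') e^{−aξ'} ξ'^{−1/2} dξ' ) dξ exists and equals i X · ( ∫_ℝ η(u) e^{−iXu} du ) · √(π/2) · (1 + i·sgn(X)) / √|X|. In other words, the Fourier transform of the dissipative half-line convolution term ξ ↦ ∫₀^∞ η_ξ(ξ+ξ')/√ξ' dξ' is the multiplier i X √(π/2)(1 + i sgn X)|X|^{−1/2} applied to the Fourier transform of η. -/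
noncomputable section

open MeasureTheory Filter

lemma aux_fubini (G k : ℝ → ℂ) (hG : Integrable G) (hk : IntegrableOn k (Set.Ioi 0)) :
    ∫ ξ : ℝ, ∫ y in Set.Ioi (0:ℝ), G (ξ + y) * k y = (∫ u, G u) * ∫ y in Set.Ioi (0:ℝ), k y := by
  have h1 : Integrable (fun z : ℝ × ℝ => G z.1 * k z.2)
      (volume.prod (volume.restrict (Set.Ioi 0))) := hG.mul_prod hk
  have mp := measurePreserving_add_prod (volume : Measure ℝ) (volume.restrict (Set.Ioi (0:ℝ)))
  have h2 : Integrable (Function.uncurry fun ξ y : ℝ => G (ξ + y) * k y)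
      (volume.prod (volume.restrict (Set.Ioi 0))) :=
    (mp.integrable_comp h1.aestronglyMeasurable).2 h1
  rw [integral_integral_swap h2, ← integral_const_mul]
  congr 1
  ext y
  rw [integral_mul_const, integral_add_right_eq_self]

lemma aux_kernel_int (a X : ℝ) (ha : 0 < a) :
    IntegrableOn (fun y : ℝ => Complex.exp (-(((a : ℂ) - Complex.I * X) * y)) *
      ((Real.sqrt y : ℝ) : ℂ)⁻¹) (Set.Ioi 0) := by
  have h := integrableOn_rpow_mul_exp_neg_mul_rpow (s := -1/2) (p := 1) (b := a)
    (by norm_num) (by norm_num) ha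
  refine Integrable.mono' h ?_ ?_
  · apply Measurable.aestronglyMeasurable
    fun_prop
  · filter_upwards [ae_restrict_mem measurableSet_Ioi] with y hy
    have hy' : (0:ℝ) < y := hy
    rw [norm_mul, Complex.norm_exp, norm_inv, Complex.norm_real, Real.norm_of_nonneg (Real.sqrt_nonneg y),
      Real.sqrt_eq_rpow, ← Real.rpow_neg hy'.le, mul_comm]
    apply le_of_eq
    norm_num

lemma aux_kernel (a X : ℝ) (ha : 0 < a) :
    ∫ y in Set.Ioi (0:ℝ), Complex.exp (-(((a : ℂ) - Complex.I * X) * y)) *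
      ((Real.sqrt y : ℝ) : ℂ)⁻¹ = (Real.pi / ((a : ℂ) - Complex.I * X)) ^ (2⁻¹ : ℂ) := by
  have hg := integral_gaussian_complex_Ioi (b := (a : ℂ) - Complex.I * X) (by simpa using ha)
  rw [← integral_comp_rpow_Ioi_of_pos (p := 2) (by norm_num)]
  have : ∀ x ∈ Set.Ioi (0:ℝ), ((2:ℝ) * x ^ ((2:ℝ) - 1)) •
      (Complex.exp (-(((a : ℂ) - Complex.I * X) * ((x ^ (2:ℝ) : ℝ) : ℂ))) *
      ((Real.sqrt (x ^ (2:ℝ)) : ℝ) : ℂ)⁻¹) =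
      2 * Complex.exp (-((a : ℂ) - Complex.I * X) * (x : ℂ) ^ 2) := by
    intro x hx
    have hx' : (0:ℝ) < x := hx
    have hxc : (x : ℂ) ≠ 0 := by exact_mod_cast hx'.ne'
    have e1 : x ^ ((2:ℝ) - 1) = x := by norm_num
    have e2 : x ^ (2:ℝ) = x ^ 2 := by norm_num
    rw [e1, e2, Real.sqrt_sq hx'.le, Complex.real_smul]
    push_cast
    rw [neg_mul]
    field_simp
  rw [setIntegral_congr_fun measurableSet_Ioi this, integral_const_mul, hg]
  norm_num
  ring

lemma aux_limit (X : ℝ) (hX : X ≠ 0) :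
    (Real.pi / (((0:ℝ) : ℂ) - Complex.I * X)) ^ (2⁻¹ : ℂ) =
    (((Real.sqrt (Real.pi / 2) : ℝ) : ℂ) * (1 + Complex.I * ((Real.sign X : ℝ) : ℂ)) /
          ((Real.sqrt |X| : ℝ) : ℂ)) := by
  have hs : ((Real.sign X : ℝ) : ℂ) ^ 2 = 1 := by
    rcases Real.sign_apply_eq_of_ne_zero X hX with h | h <;> rw [h] <;> norm_num
  have hx : (X : ℂ) = Real.sign X * |X| := by
    exact_mod_cast (by rcases lt_or_gt_of_ne hX with h | h
                       · rw [Real.sign_of_neg h, abs_of_neg h]; ring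
                       · rw [Real.sign_of_pos h, abs_of_pos h]; ring)
  have hp : (0:ℝ) < Real.sqrt (Real.pi / 2) / Real.sqrt |X| := by
    have := Real.pi_pos
    have := abs_pos.2 hX
    positivity
  have h1 : ((Real.sqrt (Real.pi / 2) : ℝ) : ℂ) ^ 2 = Real.pi / 2 := by
    have := Real.sq_sqrt (show 0 ≤ Real.pi / 2 by positivity)
    exact_mod_cast this
  have h2 : ((Real.sqrt |X| : ℝ) : ℂ) ^ 2 = (|X| : ℝ) := by
    exact_mod_cast Real.sq_sqrt (abs_nonneg X)
  rw [← Complex.sq_cpow_two_inv (x := (((Real.sqrt (Real.pi / 2) : ℝ) : ℂ) * (1 + Complex.I * ((Real.sign X : ℝ) : ℂ)) /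
          ((Real.sqrt |X| : ℝ) : ℂ)))]
  · congr 1
    have ha : ((|X| : ℝ) : ℂ) ≠ 0 := by exact_mod_cast (abs_pos.2 hX).ne'
    have hs0 : ((Real.sign X : ℝ) : ℂ) ≠ 0 := by
      intro h; rw [h] at hs; norm_num at hs
    rw [div_pow, mul_pow, h1, h2, hx, Complex.ofReal_zero, zero_sub]
    have hI := Complex.I_sq
    have hI0 := Complex.I_ne_zero
    field_simp
    linear_combination -((Complex.I * Real.sign X + 2) * Complex.I ^ 2) * hs -
      (Complex.I * Real.sign X + 2) * hI
  · have : (((Real.sqrt (Real.pi / 2) : ℝ) : ℂ) * (1 + Complex.I * ((Real.sign X : ℝ) : ℂ)) /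
          ((Real.sqrt |X| : ℝ) : ℂ)) = ((Real.sqrt (Real.pi / 2) / Real.sqrt |X| : ℝ) : ℂ) * 
          (1 + Complex.I * ((Real.sign X : ℝ) : ℂ)) := by push_cast; ring
    rw [this, Complex.re_ofReal_mul]
    simpa using hp

lemma aux_exp_int (f : SchwartzMap ℝ ℂ) (X : ℝ) :
    Integrable (fun u : ℝ => f u * Complex.exp (-(Complex.I * (X : ℂ) * (u : ℂ)))) := by
  refine Integrable.mono' f.integrable.norm ?_ ?_
  · apply Continuous.aestronglyMeasurable
    have := f.continuous
    fun_prop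
  · refine Eventually.of_forall fun u => ?_
    rw [norm_mul, Complex.norm_exp]
    simp

lemma aux_parts (η : SchwartzMap ℝ ℂ) (X : ℝ) :
    ∫ u : ℝ, deriv η u * Complex.exp (-(Complex.I * (X : ℂ) * (u : ℂ))) =
      Complex.I * X * ∫ u : ℝ, η u * Complex.exp (-(Complex.I * (X : ℂ) * (u : ℂ))) := by
  have h := integral_mul_deriv_eq_deriv_mul_of_integrable (v := η) (v' := deriv η)
    (u := fun u : ℝ => Complex.exp (-(Complex.I * (X : ℂ) * (u : ℂ))))
    (u' := fun u : ℝ => Complex.exp (-(Complex.I * (X : ℂ) * (u : ℂ))) * (-(Complex.I * X)))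
    (fun x _ => by
      have h0 : HasDerivAt (fun u : ℝ => -(Complex.I * (X : ℂ) * (u : ℂ))) (-(Complex.I * X)) x := by
        have h00 := ((Complex.ofRealCLM.hasDerivAt (x := x)).const_mul (Complex.I * (X : ℂ))).neg
        simp only [Complex.ofRealCLM_apply, Complex.ofReal_one, mul_one] at h00
        exact h00
      exact h0.cexp)
    (fun x _ => η.hasDerivAt x)
    (by
      refine (aux_exp_int (SchwartzMap.derivCLM ℂ ℂ η) X).congr (Eventually.of_forall fun u => ?_)
      simp [mul_comm])
    (by
      refine ((aux_exp_int η X).const_mul (-(Complex.I * X))).congr (Eventually.of_forall fun u => ?_)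
      simp only [Pi.mul_apply]; ring)
    (by
      refine (aux_exp_int η X).congr (Eventually.of_forall fun u => ?_)
      simp only [Pi.mul_apply]; ring)
  rw [← integral_const_mul]
  calc _ = _ := by
        congr 1; ext u; exact mul_comm _ _
    _ = _ := h
    _ = _ := by
        rw [← integral_neg]; congr 1; ext u; ring

theorem fourier_symbol_of_dissipative_term
    (η : SchwartzMap ℝ ℂ) (X : ℝ) (hX : X ≠ 0) :
    Tendsto (fun a : ℝ =>
        ∫ ξ : ℝ,
          Complex.exp (-(Complex.I * (X : ℂ) * (ξ : ℂ))) *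
            ∫ ξ' in Set.Ioi (0:ℝ),
              deriv (⇑η) (ξ + ξ') * Complex.exp (-((a : ℂ) * (ξ' : ℂ))) *
                ((Real.sqrt ξ' : ℝ) : ℂ)⁻¹)
      (nhdsWithin 0 (Set.Ioi 0))
      (nhds (Complex.I * (X : ℂ) *
        (∫ u : ℝ, η u * Complex.exp (-(Complex.I * (X : ℂ) * (u : ℂ)))) *
        (((Real.sqrt (Real.pi / 2) : ℝ) : ℂ) * (1 + Complex.I * ((Real.sign X : ℝ) : ℂ)) /
          ((Real.sqrt |X| : ℝ) : ℂ)))) := by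
  have hXc : (X : ℂ) ≠ 0 := by exact_mod_cast hX
  have hne : ((0:ℝ) : ℂ) - Complex.I * X ≠ 0 := by
    simp [hX]
  have hlim : Tendsto (fun a : ℝ => Complex.I * (X : ℂ) *
        (∫ u : ℝ, η u * Complex.exp (-(Complex.I * (X : ℂ) * (u : ℂ)))) *
        (Real.pi / ((a : ℂ) - Complex.I * X)) ^ (2⁻¹ : ℂ)) (nhds 0)
      (nhds (Complex.I * (X : ℂ) *
        (∫ u : ℝ, η u * Complex.exp (-(Complex.I * (X : ℂ) * (u : ℂ)))) *
        (Real.pi / (((0:ℝ) : ℂ) - Complex.I * X)) ^ (2⁻¹ : ℂ))) := by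
    apply Tendsto.const_mul
    have hc : ContinuousAt (fun a : ℝ => (Real.pi : ℂ) / ((a : ℂ) - Complex.I * X)) 0 := by
      exact ContinuousAt.div₀ (f := fun _ : ℝ => (Real.pi : ℂ)) (g := fun a : ℝ => (a : ℂ) - Complex.I * X)
        (by fun_prop) (by fun_prop) hne
    refine ContinuousAt.tendsto (ContinuousAt.cpow hc continuousAt_const ?_)
    right
    have : (Real.pi : ℂ) / (((0:ℝ) : ℂ) - Complex.I * X) = ((Real.pi / X : ℝ) : ℂ) * Complex.I := by
      push_cast
      rw [div_eq_iff (by simpa using hne)]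
      field_simp
      linear_combination (X : ℂ) * Complex.I_sq
    rw [this]
    simp [hX, Real.pi_ne_zero]
  rw [aux_limit X hX] at hlim
  refine (hlim.mono_left nhdsWithin_le_nhds).congr' ?_
  filter_upwards [self_mem_nhdsWithin] with a ha
  have hG : Integrable (fun u : ℝ => deriv η u * Complex.exp (-(Complex.I * (X : ℂ) * (u : ℂ)))) :=
    aux_exp_int (SchwartzMap.derivCLM ℂ ℂ η) X
  rw [← aux_kernel a X ha, ← aux_parts, ← aux_fubini _ _ hG (aux_kernel_int a X ha)]
  congr 1
  ext ξ
  rw [← integral_const_mul]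
  congr 1
  ext y
  have : Complex.exp (-(Complex.I * (X : ℂ) * ((ξ + y : ℝ) : ℂ))) *
      Complex.exp (-(((a : ℂ) - Complex.I * X) * y)) =
      Complex.exp (-(Complex.I * (X : ℂ) * (ξ : ℂ))) * Complex.exp (-((a : ℂ) * (y : ℂ))) := by
    rw [← Complex.exp_add, ← Complex.exp_add]
    congr 1
    push_cast
    ring
  linear_combination (deriv η (ξ + y) * ((Real.sqrt y : ℝ) : ℂ)⁻¹) * this
end
end
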